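/- arXiv:2401.05859 — 5 statements merged into one kernel-verified Lean document; each statement's English description precedes it below -/
import Mathlib

section
/- Let n ≥ 1 and let c, c' ∈ {0,1}^n be binary strings. If VT(c) ≡ VT(c') (mod n+1) and there exists a common string y of length n−1 that is a subsequence of both c and c', then c = c'. (Equivalently, any binary string of length n can be uniquely recovered from its VT syndrome modulo n+1 together with any one of its subsequences of length n−1.) -/
/-- The (unreduced) VT weight of a string `c = (c_1, …, c_n)`:
`Σ_{i=1}^n i·c_i`, with 1-indexed positions. -/
def vtSum (c : List ℕ) : ℕ := ∑ i ∈ Finset.range c.length, (i + 1) * c.getD i 0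

/-!
Two words that share a subsequence obtained by a single deletion are, up to exchanging them,
`A ++ a :: M ++ B` and `A ++ M ++ b :: B`. With `p = |A|`, `k = |M|` and `w = Σ M`, the weights of
the two words differ by `(a (p + 1) + w) - b (p + k + 1)`. For binary words both terms lie between
`0` and `p + k + 1`, hence below any modulus exceeding the length, so congruence makes them equal.
This excludes `a ≠ b`, and for `a = b` it says `w = k a`; so `M` is constant equal to `a`, and
inserting `a` before or after `M` gives the same word.
-/

section Sublist

variable {α : Type*}

theorem exists_eq_append_cons_of_sublist {y c : List α} (h : y.Sublist c)
    (hlen : c.length = y.length + 1) : ∃ A a B, c = A ++ a :: B ∧ y = A ++ B := by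
  induction h with
  | slnil => simp at hlen
  | @cons y c a h _ =>
    have hyc : y = c := h.eq_of_length (by simpa using hlen.symm)
    exact ⟨[], a, c, rfl, hyc⟩
  | cons_cons x _ ih =>
    obtain ⟨A, a, B, rfl, rfl⟩ := ih (by simpa using hlen)
    exact ⟨x :: A, a, B, rfl, rfl⟩

theorem exists_block_of_common_sublist {y c c' : List α} (h : y.Sublist c) (h' : y.Sublist c')
    (hlen : c.length = y.length + 1) (hlen' : c'.length = y.length + 1) :
    ∃ A M B a b, (c = A ++ a :: M ++ B ∧ c' = A ++ M ++ b :: B) ∨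
      (c' = A ++ a :: M ++ B ∧ c = A ++ M ++ b :: B) := by
  obtain ⟨A, a, B, rfl, rfl⟩ := exists_eq_append_cons_of_sublist h hlen
  obtain ⟨A', a', B', rfl, heq⟩ := exists_eq_append_cons_of_sublist h' hlen'
  obtain ⟨M, rfl, rfl⟩ | ⟨M, rfl, rfl⟩ := List.append_eq_append_iff.1 heq
  · exact ⟨A, M, B', a, a', .inl (by simp)⟩
  · exact ⟨A', M, B, a', a, .inr (by simp)⟩

theorem cons_eq_append_singleton_of_forall_eq {l : List α} {a : α} (h : ∀ x ∈ l, x = a) :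
    a :: l = l ++ [a] := by
  rw [List.eq_replicate_of_mem h, ← List.replicate_succ, ← List.replicate_succ']

end Sublist

theorem sum_range_getD {M : Type*} [AddCommMonoid M] (l : List M) :
    ∑ i ∈ Finset.range l.length, l.getD i 0 = l.sum := by
  simp [Finset.sum_range, Fin.sum_univ_getElem]

theorem forall_eq_of_sum_eq_length_nsmul {M : Type*} [AddCommMonoid M] [LinearOrder M]
    [IsOrderedCancelAddMonoid M] {l : List M} {a : M} (hle : ∀ x ∈ l, x ≤ a)
    (hsum : l.sum = l.length • a) : ∀ x ∈ l, x = a := by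
  by_contra! ⟨x, hx, hne⟩
  have hlt : (l.map id).sum < (l.map fun _ => a).sum :=
    List.sum_lt_sum id (fun _ => a) hle ⟨x, hx, (hle x hx).lt_of_ne hne⟩
  simp [hsum] at hlt

theorem sum_le_length_of_forall_lt_two {l : List ℕ} (h : ∀ x ∈ l, x < 2) : l.sum ≤ l.length := by
  simpa using l.sum_le_card_nsmul 1 fun x hx => Nat.le_of_lt_succ (h x hx)

theorem vtSum_singleton (a : ℕ) : vtSum [a] = a := by
  simp [vtSum]

theorem vtSum_append (A B : List ℕ) :
    vtSum (A ++ B) = vtSum A + (vtSum B + A.length * B.sum) := by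
  have hleft : ∑ i ∈ Finset.range A.length, (i + 1) * (A ++ B).getD i 0 = vtSum A :=
    Finset.sum_congr rfl fun i hi => by rw [List.getD_append _ _ _ _ (Finset.mem_range.1 hi)]
  have hright (i : ℕ) : (A.length + i + 1) * (A ++ B).getD (A.length + i) 0 =
      (i + 1) * B.getD i 0 + A.length * B.getD i 0 := by
    rw [List.getD_append_right _ _ _ _ (Nat.le_add_right _ _), Nat.add_sub_cancel_left]
    ring
  rw [vtSum, List.length_append, Finset.sum_range_add, hleft]
  simp only [hright, Finset.sum_add_distrib, ← Finset.mul_sum, sum_range_getD, vtSum]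

theorem vtSum_cons (a : ℕ) (l : List ℕ) : vtSum (a :: l) = a + (vtSum l + l.sum) := by
  simpa [vtSum_singleton] using vtSum_append [a] l

-- The difference of the two weights, written without subtraction.
theorem vtSum_block_add (A M B : List ℕ) (a b : ℕ) :
    vtSum (A ++ a :: M ++ B) + b * (A.length + M.length + 1) =
      vtSum (A ++ M ++ b :: B) + (a * (A.length + 1) + M.sum) := by
  simp only [vtSum_append, vtSum_cons, List.sum_cons, List.length_append, List.length_cons]
  ring

theorem eq_and_forall_eq_of_block_balance {M : List ℕ} {a b p : ℕ} (ha : a < 2) (hb : b < 2)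
    (hM : ∀ x ∈ M, x < 2) (h : a * (p + 1) + M.sum = b * (p + M.length + 1)) :
    a = b ∧ ∀ x ∈ M, x = a := by
  have hsum := sum_le_length_of_forall_lt_two hM
  interval_cases a <;> interval_cases b
  · exact ⟨rfl, List.sum_eq_zero_iff.1 (by omega)⟩
  · omega
  · omega
  · have hfull : M.sum = M.length • 1 := by rw [smul_eq_mul]; omega
    exact ⟨rfl, forall_eq_of_sum_eq_length_nsmul (fun x hx => Nat.le_of_lt_succ (hM x hx)) hfull⟩

theorem eq_of_vtSum_block_modEq {m : ℕ} {A M B : List ℕ} {a b : ℕ}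
    (hm : A.length + M.length + 1 < m) (ha : a < 2) (hb : b < 2) (hM : ∀ x ∈ M, x < 2)
    (hvt : vtSum (A ++ a :: M ++ B) ≡ vtSum (A ++ M ++ b :: B) [MOD m]) :
    A ++ a :: M ++ B = A ++ M ++ b :: B := by
  have hsum := sum_le_length_of_forall_lt_two hM
  have hleft : a * (A.length + 1) + M.sum < m := by
    have := Nat.mul_le_mul_right (A.length + 1) (Nat.le_of_lt_succ ha)
    omega
  have hright : b * (A.length + M.length + 1) < m := by
    have := Nat.mul_le_mul_right (A.length + M.length + 1) (Nat.le_of_lt_succ hb)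
    omega
  have hmod : b * (A.length + M.length + 1) ≡ a * (A.length + 1) + M.sum [MOD m] :=
    hvt.add_left_cancel (by rw [vtSum_block_add])
  obtain ⟨rfl, hconst⟩ :=
    eq_and_forall_eq_of_block_balance ha hb hM (hmod.eq_of_lt_of_lt hright hleft).symm
  rw [cons_eq_append_singleton_of_forall_eq hconst]
  simp

theorem vt_code_corrects_single_deletion_general {m : ℕ} {c c' y : List ℕ} (hm : c.length < m)
    (hlen : c.length = y.length + 1) (hlen' : c'.length = y.length + 1)
    (hbin : ∀ a ∈ c, a < 2) (hbin' : ∀ a ∈ c', a < 2)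
    (hvt : vtSum c ≡ vtSum c' [MOD m]) (hy : y.Sublist c) (hy' : y.Sublist c') :
    c = c' := by
  obtain ⟨A, M, B, a, b, ⟨rfl, rfl⟩ | ⟨rfl, rfl⟩⟩ :=
    exists_block_of_common_sublist hy hy' hlen hlen'
  · refine eq_of_vtSum_block_modEq ?_ (hbin a (by simp)) (hbin' b (by simp))
      (fun x hx => hbin x (by simp [hx])) hvt
    simp only [List.length_append, List.length_cons] at hm
    omega
  · refine (eq_of_vtSum_block_modEq ?_ (hbin' a (by simp)) (hbin b (by simp))
      (fun x hx => hbin x (by simp [hx])) hvt.symm).symm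
    simp only [List.length_append, List.length_cons] at hm
    omega

/-- if two binary strings `c, c'` of length `n ≥ 1` have the same
VT syndrome modulo `n+1` and share a common subsequence of length `n-1`,
then `c = c'`. -/
theorem vt_code_corrects_single_deletion
    (n : ℕ) (hn : 1 ≤ n) (c c' : List ℕ)
    (hc : c.length = n) (hc' : c'.length = n)
    (hbin : ∀ a ∈ c, a < 2) (hbin' : ∀ a ∈ c', a < 2)
    (hvt : vtSum c % (n + 1) = vtSum c' % (n + 1))
    (hy : ∃ y : List ℕ, y.length = n - 1 ∧ y.Sublist c ∧ y.Sublist c') :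
    c = c' := by
  obtain ⟨y, hlen, hyc, hyc'⟩ := hy
  exact vt_code_corrects_single_deletion_general (by omega) (by omega) (by omega) hbin hbin' hvt
    hyc hyc'
end

section
/- Let q ≥ 2, t ≥ 1, n ≥ t, and x ∈ Σ_q^n. Let N_t(x) be the set of all x' ∈ Σ_q^n with x' ≠ x such that B_{≤t}(x) ∩ B_{≤t}(x') ≠ ∅. Then |N_t(x)| ≤ t·n^2·q^t. -/
/-!
Deleting `s` symbols lowers the length by exactly `s`, so a common element `y` of the balls around
two strings of length `n` arises from both by bursts of the same length `s`, and `s ≥ 1` if the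
strings differ. Given `s`, there are `n + 1 - s ≤ n` choices for `y`; the other string is then `y`
with a word of length `s` inserted at one of `n - s + 1 ≤ n` positions, which leaves at most
`n * q ^ s` choices for it. Sum over `1 ≤ s ≤ t`.
-/

/-- `burst t' x` is the set `B_{t'}(x)` of strings obtained from `x` by
deleting `t'` consecutive symbols. -/
def burst (t' : ℕ) (x : List ℕ) : Set (List ℕ) :=
  {y | ∃ i, i + t' ≤ x.length ∧ y = x.take i ++ x.drop (i + t')}

/-- `burstLe t x` is the set `B_{≤t}(x) = ∪_{t'=0}^{t} B_{t'}(x)`. -/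
def burstLe (t : ℕ) (x : List ℕ) : Set (List ℕ) :=
  {y | ∃ t' ≤ t, y ∈ burst t' x}

open Finset

section Words

variable {α : Type*} {A : Finset α} {s : ℕ}

/-- The set `A ^ s` of words of length `s` over the alphabet `A`, as lists. -/
def words (A : Finset α) (s : ℕ) : Finset (List α) :=
  (Fintype.piFinset fun _ : Fin s ↦ A).map ⟨List.ofFn, List.ofFn_injective⟩

lemma card_words : #(words A s) = #A ^ s := by
  rw [words, card_map, Fintype.card_piFinset_const]

lemma mem_words {w : List α} : w ∈ words A s ↔ w.length = s ∧ ∀ a ∈ w, a ∈ A := by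
  simp only [words, mem_map, Fintype.mem_piFinset, Function.Embedding.coeFn_mk]
  constructor
  · rintro ⟨f, hf, rfl⟩
    exact ⟨List.length_ofFn, (List.forall_mem_ofFn_iff ..).2 hf⟩
  · rintro ⟨rfl, hw⟩
    exact ⟨w.get, fun i ↦ hw _ (w.get_mem i), List.ofFn_get w⟩

end Words

section Burst

variable {s : ℕ} {x y : List ℕ}

lemma burst_zero : burst 0 x = {x} := by
  ext y
  simp only [burst, add_zero, List.take_append_drop, Set.mem_ofPred_eq, Set.mem_singleton_iff]
  exact ⟨fun ⟨_, _, hy⟩ ↦ hy, fun hy ↦ ⟨0, Nat.zero_le _, hy⟩⟩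

lemma length_add_of_mem_burst (hy : y ∈ burst s x) : y.length + s = x.length := by
  obtain ⟨i, hi, rfl⟩ := hy
  simp only [List.length_append, List.length_take, List.length_drop]
  omega

/-- The ball `B_s(x)` as a finite set. -/
def burstFinset (s : ℕ) (x : List ℕ) : Finset (List ℕ) :=
  (range (x.length + 1 - s)).image fun i ↦ x.take i ++ x.drop (i + s)

lemma mem_burstFinset : y ∈ burstFinset s x ↔ y ∈ burst s x := by
  simp only [burstFinset, burst, mem_image, mem_range, Set.mem_ofPred_eq, eq_comm (a := y)]
  exact exists_congr fun i ↦ and_congr_left' (by omega)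

lemma card_burstFinset_le : #(burstFinset s x) ≤ x.length + 1 - s :=
  card_image_le.trans_eq (card_range _)

/-- The strings obtained from `y` by inserting `s` consecutive symbols from the alphabet `A`. -/
def burstInsertions (A : Finset ℕ) (s : ℕ) (y : List ℕ) : Finset (List ℕ) :=
  (range (y.length + 1) ×ˢ words A s).image fun p ↦ y.take p.1 ++ (p.2 ++ y.drop p.1)

lemma card_burstInsertions_le {A : Finset ℕ} :
    #(burstInsertions A s y) ≤ (y.length + 1) * #A ^ s :=
  card_image_le.trans_eq (by rw [card_product, card_range, card_words])

lemma mem_burstInsertions_of_mem_burst {A : Finset ℕ} (hy : y ∈ burst s x)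
    (hx : ∀ a ∈ x, a ∈ A) : x ∈ burstInsertions A s y := by
  have hlen := length_add_of_mem_burst hy
  obtain ⟨i, hi, rfl⟩ := hy
  have hi' : (x.take i).length = i := List.length_take_of_le (by omega)
  have hblock : (x.drop i).take s ∈ words A s := by
    refine mem_words.2 ⟨?_, fun a ha ↦ hx a (List.mem_of_mem_drop (List.mem_of_mem_take ha))⟩
    rw [List.length_take, List.length_drop]
    omega
  refine mem_image.2 ⟨(i, (x.drop i).take s), mem_product.2 ⟨mem_range.2 (by omega), hblock⟩, ?_⟩
  rw [List.take_left' hi', List.drop_left' hi', ← List.drop_drop, List.take_append_drop,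
    List.take_append_drop]

end Burst

section Confusable

variable (A : Finset ℕ) (t : ℕ) (x : List ℕ)

/-- The set `N_t(x)` of the strings over the alphabet `A`, other than `x` and of the same length,
that become indistinguishable from `x` after suitable bursts of at most `t` deletions. -/
def confusableNeighbors : Set (List ℕ) :=
  {x' | x'.length = x.length ∧ (∀ a ∈ x', a ∈ A) ∧ x' ≠ x ∧
    (burstLe t x ∩ burstLe t x').Nonempty}

lemma confusableNeighbors_subset_biUnion :
    confusableNeighbors A t x ⊆
      ↑((Icc 1 t).biUnion fun s ↦ (burstFinset s x).biUnion (burstInsertions A s)) := by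
  rintro x' ⟨hlen, hA, hne, y, ⟨s, hst, hyx⟩, ⟨s', -, hyx'⟩⟩
  obtain rfl : s' = s := by
    have := length_add_of_mem_burst hyx
    have := length_add_of_mem_burst hyx'
    omega
  have hs : s' ≠ 0 := by
    rintro rfl
    rw [burst_zero, Set.mem_singleton_iff] at hyx hyx'
    exact hne (hyx'.symm.trans hyx)
  simp only [mem_coe, mem_biUnion, mem_Icc]
  exact ⟨s', ⟨Nat.one_le_iff_ne_zero.2 hs, hst⟩, y, mem_burstFinset.2 hyx,
    mem_burstInsertions_of_mem_burst hyx' hA⟩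

lemma card_biUnion_burstInsertions_le (s : ℕ) :
    #((burstFinset s x).biUnion (burstInsertions A s)) ≤ (x.length + 1 - s) ^ 2 * #A ^ s := by
  have hinsert : ∀ y ∈ burstFinset s x,
      #(burstInsertions A s y) ≤ (x.length + 1 - s) * #A ^ s := by
    intro y hy
    have hlen : y.length + 1 = x.length + 1 - s := by
      have := length_add_of_mem_burst (mem_burstFinset.1 hy)
      omega
    exact hlen ▸ card_burstInsertions_le
  calc #((burstFinset s x).biUnion (burstInsertions A s))
      ≤ #(burstFinset s x) * ((x.length + 1 - s) * #A ^ s) := card_biUnion_le_card_mul _ _ _ hinsert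
    _ ≤ (x.length + 1 - s) * ((x.length + 1 - s) * #A ^ s) := by gcongr; exact card_burstFinset_le
    _ = (x.length + 1 - s) ^ 2 * #A ^ s := by ring

lemma ncard_confusableNeighbors_le_sum :
    (confusableNeighbors A t x).ncard ≤ ∑ s ∈ Icc 1 t, (x.length + 1 - s) ^ 2 * #A ^ s :=
  calc (confusableNeighbors A t x).ncard
      ≤ #((Icc 1 t).biUnion fun s ↦ (burstFinset s x).biUnion (burstInsertions A s)) :=
        (Set.ncard_le_ncard (confusableNeighbors_subset_biUnion A t x)
          (finite_toSet _)).trans_eq (Set.ncard_coe_finset _)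
    _ ≤ ∑ s ∈ Icc 1 t, #((burstFinset s x).biUnion (burstInsertions A s)) := card_biUnion_le
    _ ≤ ∑ s ∈ Icc 1 t, (x.length + 1 - s) ^ 2 * #A ^ s :=
        sum_le_sum fun s _ ↦ card_biUnion_burstInsertions_le A x s

theorem card_confusable_neighbors_le_general :
    (confusableNeighbors A t x).ncard ≤ t * x.length ^ 2 * #A ^ t := by
  have hterm : ∀ s ∈ Icc 1 t,
      (x.length + 1 - s) ^ 2 * #A ^ s ≤ x.length ^ 2 * #A ^ t := by
    intro s hs
    obtain ⟨hs, hst⟩ := mem_Icc.1 hs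
    have hpow : #A ^ s ≤ #A ^ t := by
      rcases Nat.eq_zero_or_pos #A with hA | hA
      · rw [hA, zero_pow (Nat.one_le_iff_ne_zero.1 hs)]
        exact Nat.zero_le _
      · exact Nat.pow_le_pow_right hA hst
    gcongr
    omega
  calc (confusableNeighbors A t x).ncard
      ≤ ∑ s ∈ Icc 1 t, (x.length + 1 - s) ^ 2 * #A ^ s := ncard_confusableNeighbors_le_sum A t x
    _ ≤ #(Icc 1 t) • (x.length ^ 2 * #A ^ t) := sum_le_card_nsmul _ _ _ hterm
    _ = t * x.length ^ 2 * #A ^ t := by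
        rw [Nat.card_Icc, Nat.add_sub_cancel, smul_eq_mul, mul_assoc]

end Confusable

/-- the number of strings `x' ∈ Σ_q^n`, `x' ≠ x`, whose
burst-deletion ball of radius at most `t` intersects that of `x`,
is at most `t·n²·qᵗ`. -/
theorem card_confusable_neighbors_le
    (q t n : ℕ) (hq : 2 ≤ q) (ht : 1 ≤ t) (hn : t ≤ n)
    (x : List ℕ) (hx : x.length = n) (ha : ∀ a ∈ x, a < q) :
    {x' : List ℕ | x'.length = n ∧ (∀ a ∈ x', a < q) ∧ x' ≠ x ∧
        (burstLe t x ∩ burstLe t x').Nonempty}.ncard ≤ t * n ^ 2 * q ^ t := by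
  simpa only [confusableNeighbors, mem_range, card_range, hx] using
    card_confusable_neighbors_le_general (range q) t x
end

section
/- Let q ≥ 2, 1 ≤ t' ≤ n, x ∈ Σ_q^n, and y ∈ B_{t'}(x). For each j ∈ {1,…,t'}, let I_{t',j} = {ℓ ∈ [1,n] : ℓ ≡ j (mod t')} and I'_{t',j} = {ℓ ∈ [1,n−t'] : ℓ ≡ j (mod t')}. Then for each j ∈ {1,…,t'}, the subsequence y_{I'_{t',j}} of y is obtained from the subsequence x_{I_{t',j}} of x by deleting exactly one symbol, i.e., y_{I'_{t',j}} ∈ D_1(x_{I_{t',j}}). -/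
/-- The subsequence `x_{I_{t',j}}` of `x` indexed by the 1-indexed positions
`ℓ ∈ [1, |x|]` with `ℓ ≡ j (mod t')`.  (The 0-indexed position `i`
corresponds to the 1-indexed position `i+1`.) -/
def residSub (t' j : ℕ) (x : List ℕ) : List ℕ :=
  ((List.range x.length).filter (fun i => (i + 1) % t' == j % t')).map
    (fun i => x.getD i 0)

/-- A burst of `t` deletions turns `x` into `y`: the paper's `y ∈ B_t(x)` over an arbitrary
alphabet, with the deleted block `m` and its two sides made explicit. -/
def IsBurstDeletion {α : Type*} (t : ℕ) (x y : List α) : Prop :=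
  ∃ a m c : List α, m.length = t ∧ x = a ++ m ++ c ∧ y = a ++ c

namespace IsBurstDeletion

variable {α : Type*} {t : ℕ} {x y : List α}

lemma sublist (h : IsBurstDeletion t x y) : y.Sublist x := by
  obtain ⟨a, m, c, -, rfl, rfl⟩ := h
  exact (List.sublist_append_left a m).append_right c

lemma length_eq (h : IsBurstDeletion t x y) : y.length = x.length - t := by
  obtain ⟨a, m, c, rfl, rfl, rfl⟩ := h
  simp only [List.length_append]
  omega

end IsBurstDeletion

lemma mem_burst_iff {t : ℕ} {x y : List ℕ} : y ∈ burst t x ↔ IsBurstDeletion t x y := by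
  constructor
  · rintro ⟨i, hi, rfl⟩
    refine ⟨x.take i, (x.drop i).take t, x.drop (i + t), ?_, ?_, rfl⟩
    · rw [List.length_take, List.length_drop]
      omega
    · rw [← List.take_add, List.take_append_drop]
  · rintro ⟨a, m, c, rfl, rfl, rfl⟩
    exact ⟨a.length, by simp, by simp [List.drop_append]⟩

/-- The subsequence of `x` at the positions satisfying `p`, where the positions of `x` are numbered
from `k` on. Thus `k = 1` gives the paper's `x_I`, and a later segment of a string can keep the
positions it has in the whole string. -/
def subseqFrom {α : Type*} (p : ℕ → Prop) [DecidablePred p] (k : ℕ) (x : List α) : List α :=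
  ((x.zipIdx k).filter (p ·.2)).map Prod.fst

section subseqFrom

variable {α : Type*} {p : ℕ → Prop} [DecidablePred p] {t : ℕ}

lemma subseqFrom_append (k : ℕ) (a b : List α) :
    subseqFrom p k (a ++ b) = subseqFrom p k a ++ subseqFrom p (k + a.length) b := by
  simp only [subseqFrom, List.zipIdx_append, List.filter_append, List.map_append]

lemma length_subseqFrom (k : ℕ) (x : List α) :
    (subseqFrom p k x).length = ((Finset.Ico k (k + x.length)).filter p).card :=
  calc (subseqFrom p k x).length
      = ((x.zipIdx k).map Prod.snd).countP p := by
        rw [subseqFrom, List.length_map, List.countP_map, List.countP_eq_length_filter]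
        rfl
    -- Written so as to match what `Finset.Ico k (k + x.length)` unfolds to.
    _ = (List.range' k (k + x.length - k)).countP p := by
        rw [List.zipIdx_map_snd, Nat.add_sub_cancel_left]
    _ = ((Finset.Ico k (k + x.length)).filter p).card := List.countP_eq_length_filter

lemma subseqFrom_add_period (hp : Function.Periodic p t) (k : ℕ) (x : List α) :
    subseqFrom p (k + t) x = subseqFrom p k x := by
  induction x generalizing k with
  | nil => rfl
  | cons s x ih =>
    have ih' := ih (k + 1)
    rw [Nat.add_right_comm] at ih'
    simp only [subseqFrom] at ih' ⊢
    by_cases hk : p k <;> simp [hp k, hk, ih']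

lemma IsBurstDeletion.subseqFrom_of_periodic {x y : List α} (h : IsBurstDeletion t x y)
    (hp : Function.Periodic p t) (k : ℕ) :
    IsBurstDeletion (t.count p) (subseqFrom p k x) (subseqFrom p k y) := by
  obtain ⟨a, m, c, rfl, rfl, rfl⟩ := h
  refine ⟨_, subseqFrom p (k + a.length) m, _, ?_, ?_, subseqFrom_append k a c⟩
  · rw [length_subseqFrom, Nat.filter_Ico_card_eq_of_periodic _ _ _ hp]
  · rw [subseqFrom_append, subseqFrom_append, List.length_append, ← Nat.add_assoc,
      subseqFrom_add_period hp]

end subseqFrom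

lemma periodic_modEq (t j : ℕ) : Function.Periodic (· ≡ j [MOD t]) t :=
  (Nat.periodic_mod t).comp (· = j % t)

lemma count_modEq_self {t : ℕ} (ht : 0 < t) (j : ℕ) : t.count (· ≡ j [MOD t]) = 1 := by
  simp [Nat.count_modEq_card, ht]

lemma residSub_eq_subseqFrom (t j : ℕ) (x : List ℕ) :
    residSub t j x = subseqFrom (· ≡ j [MOD t]) 1 x := by
  have zipIdx_eq : x.zipIdx 1 = (List.range x.length).map fun i => (x.getD i 0, i + 1) :=
    List.ext_getElem (by simp) (by simp +contextual [add_comm])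
  rw [residSub, subseqFrom, zipIdx_eq, List.filter_map, List.map_map]
  rfl

theorem burst_residue_single_deletion_general {α : Type*} {t : ℕ} (ht : 0 < t) {x y : List α}
    (h : IsBurstDeletion t x y) (j : ℕ) :
    IsBurstDeletion 1 (subseqFrom (· ≡ j [MOD t]) 1 x) (subseqFrom (· ≡ j [MOD t]) 1 y) :=
  count_modEq_self ht j ▸ h.subseqFrom_of_periodic (periodic_modEq t j) 1

/-- if `y` is obtained from `x ∈ Σ_q^n` by a burst of `t'`
deletions, then for each `j ∈ [1, t']` the residue-class subsequence
`y_{I'_{t',j}}` is obtained from `x_{I_{t',j}}` by a single deletion;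
i.e. it is a subsequence of `x_{I_{t',j}}` of length `|x_{I_{t',j}}| - 1`. -/
theorem burst_residue_single_deletion
    (q t' n : ℕ) (hq : 2 ≤ q) (ht1 : 1 ≤ t') (htn : t' ≤ n)
    (x y : List ℕ) (hx : x.length = n) (ha : ∀ a ∈ x, a < q)
    (hy : y ∈ burst t' x) (j : ℕ) (hj1 : 1 ≤ j) (hjt : j ≤ t') :
    (residSub t' j y).Sublist (residSub t' j x) ∧
      (residSub t' j y).length = (residSub t' j x).length - 1 := by
  have h := burst_residue_single_deletion_general ht1 (mem_burst_iff.1 hy) j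
  simpa only [residSub_eq_subseqFrom] using And.intro h.sublist h.length_eq
end

section
/- Let q ≥ 2, t ≥ 1, 1 ≤ t' ≤ t, x ∈ Σ_q^n, and y ∈ B_{t'}(x). Then a_0(x) − a_0(y) ∈ {−1, 0, 1, 2}; that is, a burst of at most t deletions destroys at most two occurrences of the pattern p = 0^t1^t and creates at most one new occurrence. -/
/-!
The word `0^t 1^t` is unbordered: no proper nonempty prefix is also a suffix. Hence distinct
occurrences of it in a word are disjoint. Let `y` arise from `x` by deleting the block `[d, d + s)`.
The occurrences in `x` that do not touch the block correspond to the occurrences in `y` that do not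
straddle the cut at `d`, so the number of occurrences changes by the difference between those that
touch the block and those that straddle the cut. Both exceptional families are packings of disjoint
windows of length `m = 2t` into an interval: at most `2m - 2` positions are available around the
cut, so at most one window fits, and at most `2m - 2 + s` around the block, which is less than `3m`
as long as `s ≤ m + 1`, so that at most two fit.
-/

/-- The pattern `p = 0^t 1^t`: `t` zeros followed by `t` ones. -/
def pat (t : ℕ) : List ℕ := List.replicate t 0 ++ List.replicate t 1

/-- The set of (0-indexed) positions at which the pattern `p = 0^t 1^t`
occurs in `x`. -/
def patOcc (t : ℕ) (x : List ℕ) : Finset ℕ :=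
  (Finset.range x.length).filter (fun i => (x.drop i).take (2 * t) = pat t)

/-- `a_0(x) = Σ_i 1_p(x)_i`, the number of occurrences of `p` in `x`. -/
def a0 (t : ℕ) (x : List ℕ) : ℕ := (patOcc t x).card

open Finset

section Pattern

variable {α : Type*}

/-- A word is unbordered if its only nonempty border (a prefix that is also a suffix) is the word
itself. This is what makes occurrences of a pattern disjoint. By this convention the empty word is
unbordered. -/
def Unbordered (p : List α) : Prop :=
  ∀ b, b ≠ [] → b <+: p → b <:+ p → b = p

/-- The word obtained from `x` by a burst deleting the block of positions `[d, d + s)`, cut off at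
the end of `x` if the block is not contained in it. -/
def deleteBlock (d s : ℕ) (x : List α) : List α := x.take d ++ x.drop (d + s)

lemma Unbordered.add_length_le {p x : List α} (hp : Unbordered p) {i j : ℕ}
    (hi : p <+: x.drop i) (hj : p <+: x.drop j) (hij : i < j) : i + p.length ≤ j := by
  by_contra! hlt
  have overlap_prefix_x : p.drop (j - i) <+: x.drop j := by
    simpa [Nat.add_sub_cancel' hij.le] using hi.drop (j - i)
  have overlap_prefix : p.drop (j - i) <+: p :=
    List.prefix_of_prefix_length_le overlap_prefix_x hj (by simp)
  have overlap_ne_nil : p.drop (j - i) ≠ [] := by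
    rw [Ne, List.drop_eq_nil_iff]
    omega
  have overlap_eq := hp _ overlap_ne_nil overlap_prefix (List.drop_suffix _ _)
  have := congrArg List.length overlap_eq
  rw [List.length_drop] at this
  omega

lemma prefix_drop_congr {p x y : List α} {d i : ℕ} (hxy : x.take d = y.take d)
    (hi : i + p.length ≤ d) : p <+: x.drop i ↔ p <+: y.drop i := by
  have window_eq : x.take (i + p.length) = y.take (i + p.length) := by
    simpa [List.take_take, hi] using congrArg (List.take (i + p.length)) hxy
  rw [List.prefix_iff_eq_take, List.prefix_iff_eq_take, List.take_drop, List.take_drop, window_eq]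

lemma take_deleteBlock (d s : ℕ) (x : List α) : (deleteBlock d s x).take d = x.take d := by
  rcases le_total d x.length with h | h
  · simp [deleteBlock, h]
  · simp [deleteBlock, h, List.drop_eq_nil_of_le (h.trans (Nat.le_add_right d s))]

lemma drop_deleteBlock {d i : ℕ} (hi : d ≤ i) (s : ℕ) (x : List α) :
    (deleteBlock d s x).drop i = x.drop (i + s) := by
  rcases le_total d x.length with h | h
  · rw [deleteBlock, List.drop_append, List.drop_eq_nil_of_le (by simp; omega), List.nil_append,
      List.length_take_of_le h, List.drop_drop]
    congr 1
    omega
  · rw [List.drop_eq_nil_of_le (by simp [deleteBlock]; omega),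
      List.drop_eq_nil_of_le (by omega)]

variable [DecidableEq α]

/-- The (0-indexed) positions at which the pattern `p` occurs in `x`; positions past the end of `x`
are excluded, so that the set is finite also for `p = []`. -/
def occurrences (p x : List α) : Finset ℕ := {i ∈ range x.length | p <+: x.drop i}

/-- The occurrences `i` of `p` in `x` whose window `[i, i + |p|)` meets the block `[d, e)`, or, when
`e = d`, has the cut between positions `d - 1` and `d` in its interior. -/
def touchingOccurrences (p x : List α) (d e : ℕ) : Finset ℕ :=
  {i ∈ occurrences p x | d < i + p.length ∧ i < e}

lemma touchingOccurrences_subset (p x : List α) (d e : ℕ) :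
    touchingOccurrences p x d e ⊆ occurrences p x :=
  filter_subset _ _

lemma mem_occurrences {p : List α} (hp : p ≠ []) {x : List α} {i : ℕ} :
    i ∈ occurrences p x ↔ p <+: x.drop i := by
  rw [occurrences, mem_filter, mem_range, and_iff_right_iff_imp]
  intro h
  have := h.length_le
  have := List.length_pos_of_ne_nil hp
  rw [List.length_drop] at *
  omega

lemma Unbordered.pairwiseDisjoint_occurrences {p : List α} (hp : Unbordered p) (x : List α) :
    (occurrences p x : Set ℕ).PairwiseDisjoint fun i ↦ Ico i (i + p.length) := by
  intro i hi j hj hij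
  have hi' := (mem_filter.1 hi).2
  have hj' := (mem_filter.1 hj).2
  rw [Function.onFun, ← disjoint_coe, coe_Ico, coe_Ico, Set.Ico_disjoint_Ico]
  rcases hij.lt_or_gt with h | h
  · have := hp.add_length_le hi' hj' h
    omega
  · have := hp.add_length_le hj' hi' h
    omega

lemma card_mul_le_of_pairwiseDisjoint_Ico {S : Finset ℕ} {m a b : ℕ}
    (hdisj : (S : Set ℕ).PairwiseDisjoint fun i ↦ Ico i (i + m))
    (hsub : ∀ i ∈ S, Ico i (i + m) ⊆ Ico a b) : #S * m ≤ b - a :=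
  calc #S * m = ∑ i ∈ S, #(Ico i (i + m)) := by simp
    _ = #(S.biUnion fun i ↦ Ico i (i + m)) := (card_biUnion hdisj).symm
    _ ≤ #(Ico a b) := card_le_card (biUnion_subset.2 hsub)
    _ = b - a := Nat.card_Ico a b

lemma Unbordered.card_touchingOccurrences_mul_le {p : List α} (hp : Unbordered p) (x : List α)
    (d e : ℕ) :
    #(touchingOccurrences p x d e) * p.length ≤ 2 * (p.length - 1) + (e - d) := by
  have hdisj : (touchingOccurrences p x d e : Set ℕ).PairwiseDisjoint
      fun i ↦ Ico i (i + p.length) :=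
    (hp.pairwiseDisjoint_occurrences x).subset (coe_subset.2 (touchingOccurrences_subset p x d e))
  have hsub : ∀ i ∈ touchingOccurrences p x d e,
      Ico i (i + p.length) ⊆ Ico (d + 1 - p.length) (e + p.length - 1) := by
    intro i hi
    obtain ⟨_, hdi, hie⟩ := mem_filter.1 hi
    exact Ico_subset_Ico (by omega) (by omega)
  have := card_mul_le_of_pairwiseDisjoint_Ico hdisj hsub
  omega

lemma mem_occurrences_deleteBlock_of_le {p : List α} (hp : p ≠ []) {x : List α} {d s i : ℕ}
    (hi : i + p.length ≤ d) : i ∈ occurrences p (deleteBlock d s x) ↔ i ∈ occurrences p x := by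
  rw [mem_occurrences hp, mem_occurrences hp, prefix_drop_congr (take_deleteBlock d s x) hi]

lemma mem_occurrences_deleteBlock_of_ge {p : List α} (hp : p ≠ []) {x : List α} {d s i : ℕ}
    (hi : d ≤ i) : i ∈ occurrences p (deleteBlock d s x) ↔ i + s ∈ occurrences p x := by
  rw [mem_occurrences hp, mem_occurrences hp, drop_deleteBlock hi]

lemma mem_occurrences_sdiff_touchingOccurrences {p x : List α} {d e i : ℕ} :
    i ∈ occurrences p x \ touchingOccurrences p x d e ↔
      i ∈ occurrences p x ∧ (i + p.length ≤ d ∨ e ≤ i) := by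
  grind [touchingOccurrences]

lemma card_occurrences_sdiff_touchingOccurrences {p : List α} (hp : p ≠ []) (x : List α)
    (d s : ℕ) :
    #(occurrences p (deleteBlock d s x) \ touchingOccurrences p (deleteBlock d s x) d d) =
      #(occurrences p x \ touchingOccurrences p x d (d + s)) := by
  have hlen := List.length_pos_of_ne_nil hp
  refine card_bij (fun i _ ↦ if i < d then i else i + s) ?maps_to ?injective ?surjective
  all_goals simp only [mem_occurrences_sdiff_touchingOccurrences]
  case maps_to =>
    rintro i ⟨hi, hbefore | hafter⟩
    · rw [if_pos (by omega)]
      exact ⟨(mem_occurrences_deleteBlock_of_le hp hbefore).1 hi, .inl hbefore⟩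
    · rw [if_neg (by omega)]
      exact ⟨(mem_occurrences_deleteBlock_of_ge hp hafter).1 hi, .inr (by omega)⟩
  case injective =>
    intro i _ j _ hij
    split_ifs at hij <;> omega
  case surjective =>
    rintro j ⟨hj, hbefore | hafter⟩
    · exact ⟨j, ⟨(mem_occurrences_deleteBlock_of_le hp hbefore).2 hj, .inl hbefore⟩,
        if_pos (by omega)⟩
    · obtain ⟨i, rfl⟩ := Nat.exists_eq_add_of_le' (show s ≤ j by omega)
      have hi : d ≤ i := by omega
      exact ⟨i, ⟨(mem_occurrences_deleteBlock_of_ge hp hi).2 hj, .inr hi⟩, if_neg (by omega)⟩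

lemma card_occurrences_add_card_touchingOccurrences {p : List α} (hp : p ≠ []) (x : List α)
    (d s : ℕ) :
    #(occurrences p x) + #(touchingOccurrences p (deleteBlock d s x) d d) =
      #(occurrences p (deleteBlock d s x)) + #(touchingOccurrences p x d (d + s)) := by
  have untouched := card_occurrences_sdiff_touchingOccurrences hp x d s
  have split_before := card_sdiff_add_card_eq_card (touchingOccurrences_subset p x d (d + s))
  have split_after :=
    card_sdiff_add_card_eq_card (touchingOccurrences_subset p (deleteBlock d s x) d d)
  omega

theorem a0_change_under_burst_general {p : List α} (hp : p ≠ []) (hub : Unbordered p) {s : ℕ}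
    (hs : s ≤ p.length + 1) (d : ℕ) (x : List α) :
    (#(occurrences p x) : ℤ) - #(occurrences p (deleteBlock d s x)) ∈ ({-1, 0, 1, 2} : Set ℤ) := by
  have hlen := List.length_pos_of_ne_nil hp
  have created : #(touchingOccurrences p (deleteBlock d s x) d d) < 2 := by
    have := hub.card_touchingOccurrences_mul_le (deleteBlock d s x) d d
    exact Nat.lt_of_mul_lt_mul_right (a := p.length) (by omega)
  have destroyed : #(touchingOccurrences p x d (d + s)) < 3 := by
    have := hub.card_touchingOccurrences_mul_le x d (d + s)
    exact Nat.lt_of_mul_lt_mul_right (a := p.length) (by omega)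
  have balance := card_occurrences_add_card_touchingOccurrences hp x d s
  simp only [Set.mem_insert_iff, Set.mem_singleton_iff]
  omega

end Pattern

lemma length_pat (t : ℕ) : (pat t).length = 2 * t := by
  simp [pat, two_mul]

lemma getElem?_pat {t k : ℕ} (hk : k < 2 * t) : (pat t)[k]? = some (if k < t then 0 else 1) := by
  grind [pat]

lemma unbordered_pat (t : ℕ) : Unbordered (pat t) := by
  intro b hb hprefix hsuffix
  by_contra hne
  have hpos := List.length_pos_of_ne_nil hb
  have hlt : b.length < 2 * t := by
    have := hprefix.length_le
    have := mt hprefix.eq_of_length hne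
    rw [length_pat] at *
    omega
  -- Position `k` of a proper border carries a `0` of the prefix `b` and a `1` of the suffix `b`.
  obtain ⟨k, hkb, hkt, htk⟩ : ∃ k < b.length, k < t ∧ t ≤ k + (2 * t - b.length) :=
    ⟨min b.length t - 1, by omega, by omega, by omega⟩
  have b_eq_zero : b[k]? = some 0 := by
    rw [List.getElem?_eq_getElem hkb, ← List.prefix_iff_getElem?.1 hprefix k hkb,
      getElem?_pat (by omega), if_pos hkt]
  have b_eq_one : b[k]? = some 1 := by
    rw [List.suffix_iff_eq_drop.1 hsuffix, List.getElem?_drop, length_pat, add_comm,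
      getElem?_pat (by omega), if_neg (by omega)]
  simp [b_eq_zero] at b_eq_one

lemma a0_eq_card_occurrences (t : ℕ) (x : List ℕ) : a0 t x = #(occurrences (pat t) x) := by
  simp only [a0, patOcc, occurrences, List.prefix_iff_eq_take, length_pat, eq_comm]

/-- a burst of `t'` deletions (`1 ≤ t' ≤ t`) destroys at most
two occurrences of the pattern `p = 0^t 1^t` and creates at most one, i.e.
`a_0(x) − a_0(y) ∈ {−1, 0, 1, 2}`. -/
theorem a0_change_under_burst
    (q t t' n : ℕ) (hq : 2 ≤ q) (ht1 : 1 ≤ t') (ht2 : t' ≤ t)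
    (x y : List ℕ) (hx : x.length = n) (ha : ∀ a ∈ x, a < q)
    (hy : y ∈ burst t' x) :
    (a0 t x : ℤ) - (a0 t y : ℤ) ∈ ({-1, 0, 1, 2} : Set ℤ) := by
  obtain ⟨d, -, rfl⟩ := hy
  have hp : pat t ≠ [] := List.ne_nil_of_length_pos (by rw [length_pat]; omega)
  rw [a0_eq_card_occurrences, a0_eq_card_occurrences]
  exact a0_change_under_burst_general hp (unbordered_pat t) (by rw [length_pat]; omega) d x
end

section
/- Let q ≥ 2, t ≥ 1, n ≥ 1, s ≥ 1, δ = 2t·q^{2t}·⌈log_2 n⌉, and let f : Σ_q^n → Σ_q^s be a function such that for all (p,δ)-dense x, x' ∈ Σ_q^n with f(x) = f(x') and B_{≤t}(x) ∩ B_{≤t}(x') ≠ ∅, one has x = x'. For (p,δ)-dense x ∈ Σ_q^n, define E(x) = x · 0^t · 1 · f(x) ∈ Σ_q^{n+t+1+s} (the concatenation of x, t zeros, a one, and f(x)). Then for all (p,δ)-dense x, x' ∈ Σ_q^n, if B_{≤t}(E(x)) ∩ B_{≤t}(E(x')) ≠ ∅ then x = x'. Consequently, the code C = {E(x) : x ∈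 Σ_q^n is (p,δ)-dense} corrects any burst of at most t deletions. -/
/-- `x` is `(p,δ)`-dense: every substring of `x` of length `δ` contains an
occurrence of `p = 0^t 1^t`. -/
def pdense (t δ : ℕ) (x : List ℕ) : Prop :=
  ∀ a, a + δ ≤ x.length →
    ∃ i, a ≤ i ∧ i + 2 * t ≤ a + δ ∧ (x.drop i).take (2 * t) = pat t

section EraseBlock

variable {α : Type*} {x : List α} {i k m t : ℕ}

/-- The string `x` with the `k` consecutive symbols from position `i` on deleted, over any alphabet.
If `x` has fewer than `i + k` symbols, then fewer than `k` are deleted. -/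
def eraseBlock (i k : ℕ) (x : List α) : List α := x.take i ++ x.drop (i + k)

/-- The ball `B_{≤t}(x)` over any alphabet; over `ℕ` it unfolds to `burstLe t x`. -/
def deletionBall (t : ℕ) (x : List α) : Set (List α) :=
  {y | ∃ k ≤ t, ∃ i, i + k ≤ x.length ∧ y = eraseBlock i k x}

theorem length_eraseBlock (h : i + k ≤ x.length) : (eraseBlock i k x).length = x.length - k := by
  simp only [eraseBlock, List.length_append, List.length_take, List.length_drop]
  omega

theorem eraseBlock_zero_right (i : ℕ) (x : List α) : eraseBlock i 0 x = x :=
  List.take_append_drop i x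

theorem eraseBlock_append_of_le_length (h : i + k ≤ x.length) (w : List α) :
    eraseBlock i k (x ++ w) = eraseBlock i k x ++ w := by
  rw [eraseBlock, eraseBlock, List.take_append_of_le_length (by omega),
    List.drop_append_of_le_length h, List.append_assoc]

theorem prefix_eraseBlock {p : List α} (hp : p <+: x) (h : p.length ≤ i) (k : ℕ) :
    p <+: eraseBlock i k x :=
  (List.prefix_take_iff.mpr ⟨hp, h⟩).trans (List.prefix_append _ _)

theorem take_mem_deletionBall (h : x.length - m ≤ t) : x.take m ∈ deletionBall t x := by
  refine ⟨x.length - m, h, min m x.length, by omega, ?_⟩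
  rw [eraseBlock, List.drop_of_length_le (by omega), List.append_nil, ← List.take_eq_take_min]

-- If `k > x.length`, the truncated subtraction gives the empty string, and `x` is deleted entirely.
theorem take_eraseBlock_append_mem_deletionBall (hk : k ≤ t) (i : ℕ) (x w : List α) :
    (eraseBlock i k (x ++ w)).take (x.length - k) ∈ deletionBall t x := by
  by_cases hi : i + k ≤ x.length
  · rw [eraseBlock_append_of_le_length hi, ← length_eraseBlock hi, List.take_left]
    exact ⟨k, hk, i, hi, rfl⟩
  · have hlen : (x.take (x.length - k)).length = x.length - k := by simp
    have hprefix : x.take (x.length - k) <+: eraseBlock i k (x ++ w) :=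
      prefix_eraseBlock ((List.take_prefix _ x).trans (List.prefix_append x w)) (by omega) k
    rw [List.prefix_iff_eq_take, hlen] at hprefix
    rw [← hprefix]
    exact take_mem_deletionBall (by omega)

end EraseBlock

section Marker

variable {α : Type*} {a b : α} {x x' u u' : List α} {i i' k t : ℕ}

/-- The string `x a^t b u`, in which `a^t b` marks where `x` ends and `u` begins. The encoding
`E(x)` is `appendWithMarker 0 1 t x (f x)`. -/
def appendWithMarker (a b : α) (t : ℕ) (x u : List α) : List α :=
  x ++ List.replicate t a ++ [b] ++ u

theorem length_appendWithMarker :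
    (appendWithMarker a b t x u).length = x.length + t + 1 + u.length := by
  simp only [appendWithMarker, List.length_append, List.length_replicate, List.length_singleton]

theorem drop_eraseBlock_appendWithMarker (hi : i + k ≤ x.length + t) :
    (eraseBlock i k (appendWithMarker a b t x u)).drop (x.length + t - k) = b :: u := by
  have hlen : (x ++ List.replicate t a).length = x.length + t := by simp
  rw [← hlen] at hi ⊢
  rw [appendWithMarker, List.append_assoc _ [b], eraseBlock_append_of_le_length hi,
    ← length_eraseBlock hi, List.drop_left, List.singleton_append]

theorem prefix_eraseBlock_appendWithMarker (hk₀ : 0 < k) (hk : k ≤ t)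
    (hi : x.length + t < i + k) :
    x ++ List.replicate (t + 1 - k) a <+: eraseBlock i k (appendWithMarker a b t x u) := by
  have hsplit :
      List.replicate t a = List.replicate (t + 1 - k) a ++ List.replicate (k - 1) a := by
    rw [← List.replicate_add, show t + 1 - k + (k - 1) = t by omega]
  refine prefix_eraseBlock ⟨List.replicate (k - 1) a ++ [b] ++ u, ?_⟩ ?_ k
  · rw [appendWithMarker, hsplit]
    simp only [List.append_assoc]
  · rw [List.length_append, List.length_replicate]
    omega

theorem drop_eq_or_prefix_eraseBlock_appendWithMarker (hk : k ≤ t) (i : ℕ) (a b : α)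
    (x u : List α) :
    (eraseBlock i k (appendWithMarker a b t x u)).drop (x.length + t - k) = b :: u ∨
      x ++ List.replicate (t + 1 - k) a <+: eraseBlock i k (appendWithMarker a b t x u) := by
  rcases Nat.eq_zero_or_pos k with rfl | hk₀
  · -- An empty block may as well be deleted at position `0`, which is before the marker's `b`.
    rw [eraseBlock_zero_right, ← eraseBlock_zero_right 0 (appendWithMarker a b t x u)]
    exact .inl (drop_eraseBlock_appendWithMarker (by omega))
  · exact (le_or_gt (i + k) (x.length + t)).imp drop_eraseBlock_appendWithMarker
      (prefix_eraseBlock_appendWithMarker hk₀ hk)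

theorem not_prefix_of_drop_eq_cons {y : List α} (hab : a ≠ b) (hk : k ≤ t)
    (h : y.drop (x.length + t - k) = b :: u) : ¬x ++ List.replicate (t + 1 - k) a <+: y := by
  rintro ⟨z, rfl⟩
  have hlen : (x ++ List.replicate (t - k) a).length = x.length + t - k := by
    rw [List.length_append, List.length_replicate]
    omega
  rw [show t + 1 - k = t - k + 1 by omega, List.replicate_succ', ← List.append_assoc,
    List.append_assoc _ [a], ← hlen, List.drop_left] at h
  exact hab (List.cons.inj h).1

theorem eq_or_eq_of_eraseBlock_appendWithMarker_eq (hab : a ≠ b) (hlen : x.length = x'.length)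
    (hk : k ≤ t)
    (h : eraseBlock i k (appendWithMarker a b t x u) =
      eraseBlock i' k (appendWithMarker a b t x' u')) :
    x = x' ∨ u = u' := by
  have hy := drop_eq_or_prefix_eraseBlock_appendWithMarker hk i a b x u
  have hy' := drop_eq_or_prefix_eraseBlock_appendWithMarker hk i' a b x' u'
  rw [← h] at hy'
  rcases hy with hu | hx <;> rcases hy' with hu' | hx'
  · rw [hlen] at hu
    exact .inr (List.cons.inj (hu.symm.trans hu')).2
  · rw [hlen] at hu
    exact absurd hx' (not_prefix_of_drop_eq_cons hab hk hu)
  · rw [← hlen] at hu'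
    exact absurd hx (not_prefix_of_drop_eq_cons hab hk hu')
  · have hprefix : x <+: x' :=
      List.prefix_of_prefix_length_le ((List.prefix_append x _).trans hx)
        ((List.prefix_append x' _).trans hx') hlen.le
    exact .inl (hprefix.eq_of_length hlen)

theorem eq_or_eq_and_nonempty_inter_deletionBall (hab : a ≠ b) (hx : x.length = x'.length)
    (hu : u.length = u'.length)
    (h : (deletionBall t (appendWithMarker a b t x u) ∩
      deletionBall t (appendWithMarker a b t x' u')).Nonempty) :
    x = x' ∨ u = u' ∧ (deletionBall t x ∩ deletionBall t x').Nonempty := by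
  obtain ⟨y, ⟨k, hk, i, hi, hy⟩, k', -, i', hi', hy'⟩ := h
  obtain rfl : k = k' := by
    have hlen := length_eraseBlock hi
    rw [← hy, hy', length_eraseBlock hi'] at hlen
    simp only [length_appendWithMarker] at hi hi' hlen
    omega
  refine (eq_or_eq_of_eraseBlock_appendWithMarker_eq hab hx hk (hy.symm.trans hy')).imp_right
    fun huu' ↦ ⟨huu', y.take (x.length - k), ?_, ?_⟩
  · rw [hy, appendWithMarker, List.append_assoc, List.append_assoc]
    exact take_eraseBlock_append_mem_deletionBall hk i x _
  · rw [hx, hy', appendWithMarker, List.append_assoc, List.append_assoc]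
    exact take_eraseBlock_append_mem_deletionBall hk i' x' _

end Marker

theorem marker_encoding_corrects_burst_general {α : Type*} {a b : α} (hab : a ≠ b) {t n s : ℕ}
    {D : Set (List α)} (hD : ∀ x ∈ D, x.length = n)
    {f : List α → List α} (hf : ∀ x ∈ D, (f x).length = s)
    (hsep : ∀ x ∈ D, ∀ x' ∈ D, f x = f x' →
      (deletionBall t x ∩ deletionBall t x').Nonempty → x = x') :
    ∀ x ∈ D, ∀ x' ∈ D,
      (deletionBall t (appendWithMarker a b t x (f x)) ∩
        deletionBall t (appendWithMarker a b t x' (f x'))).Nonempty → x = x' := by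
  intro x hx x' hx' h
  have hlen : x.length = x'.length := (hD x hx).trans (hD x' hx').symm
  have hflen : (f x).length = (f x').length := (hf x hx).trans (hf x' hx').symm
  rcases eq_or_eq_and_nonempty_inter_deletionBall hab hlen hflen h with h_eq | ⟨hfx, hball⟩
  · exact h_eq
  · exact hsep x hx x' hx' hfx hball

/-- Theorem 2: suppose `f : Σ_q^n → Σ_q^s` is a sketch that
separates `(p,δ)`-dense strings with intersecting `B_{≤t}` balls, where
`δ = 2t·q^{2t}·⌈log₂ n⌉`.  Then the encoding
`E(x) = x · 0^t · 1 · f(x) ∈ Σ_q^{n+t+1+s}` yields a code on the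
`(p,δ)`-dense strings that corrects any burst of at most `t` deletions:
if `B_{≤t}(E(x)) ∩ B_{≤t}(E(x')) ≠ ∅` then `x = x'`. -/
theorem marker_encoding_corrects_burst
    (q t n s : ℕ) (hq : 2 ≤ q) (ht : 1 ≤ t) (hn : 1 ≤ n) (hs : 1 ≤ s)
    (δ : ℕ) (hδ : δ = 2 * t * q ^ (2 * t) * Nat.clog 2 n)
    (f : List ℕ → List ℕ)
    (hflen : ∀ x : List ℕ, (f x).length = s)
    (hfal : ∀ x : List ℕ, ∀ a ∈ f x, a < q)
    (hfsep : ∀ x x' : List ℕ, x.length = n → x'.length = n →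
      (∀ a ∈ x, a < q) → (∀ a ∈ x', a < q) →
      pdense t δ x → pdense t δ x' → f x = f x' →
      (burstLe t x ∩ burstLe t x').Nonempty → x = x') :
    ∀ x x' : List ℕ, x.length = n → x'.length = n →
      (∀ a ∈ x, a < q) → (∀ a ∈ x', a < q) →
      pdense t δ x → pdense t δ x' →
      (burstLe t (x ++ List.replicate t 0 ++ [1] ++ f x) ∩
        burstLe t (x' ++ List.replicate t 0 ++ [1] ++ f x')).Nonempty →
      x = x' := by
  intro x x' hx hx' hxq hxq' hd hd'
  exact marker_encoding_corrects_burst_general (D := {x | x.length = n ∧ (∀ a ∈ x, a < q) ∧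
      pdense t δ x}) zero_ne_one (fun _ hz ↦ hz.1) (fun z _ ↦ hflen z)
    (fun z hz z' hz' ↦ hfsep z z' hz.1 hz'.1 hz.2.1 hz'.2.1 hz.2.2 hz'.2.2)
    x ⟨hx, hxq, hd⟩ x' ⟨hx', hxq', hd'⟩
end
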